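/- arXiv:2605.04529 — 3 statements merged into one kernel-verified Lean document; each statement's English description precedes it below -/
import Mathlib

section
/- Let (R, 𝔪) be a commutative Artinian local ring with residue field k = R/𝔪, and let σ = (Z, P) be a stability condition on D^b(R) = D^b(mod R) having the Jordan–Hölder property. Then the residue field k, viewed as an object of D^b(mod R) concentrated in degree 0, is σ-stable. -/
open CategoryTheory Limits Pretriangulated DerivedCategory

universe w v u

section StabilityDefs

variable {D : Type*} [Category D] [HasZeroObject D] [Preadditive D] [HasShift D ℤ]
  [∀ n : ℤ, (CategoryTheory.shiftFunctor D n).Additive] [Pretriangulated D]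

/-- An object `E` has a Harder–Narasimhan filtration with respect to the slicing `P`:
a finite sequence `0 = X₀ → X₁ → ⋯ → Xₙ ≅ E` such that the cone of each
`X_{i-1} → X_i` is a nonzero object of `P(φ_i)`, with `φ₁ > φ₂ > ⋯ > φₙ`. -/
def HasHNFiltration (P : ℝ → Set D) (E : D) : Prop :=
  ∃ (n : ℕ) (X : Fin (n + 1) → D) (f : ∀ i : Fin n, X i.castSucc ⟶ X i.succ)
    (φ : Fin n → ℝ), IsZero (X 0) ∧ Nonempty (X (Fin.last n) ≅ E) ∧ StrictAnti φ ∧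
    ∀ i : Fin n, ∃ (A : D) (g : X i.succ ⟶ A) (h : A ⟶ (X i.castSucc)⟦(1 : ℤ)⟧),
      (Triangle.mk (f i) g h ∈ distTriang D) ∧ ¬ IsZero A ∧ A ∈ P (φ i)

/-- A (Bridgeland) stability condition on the full triangulated subcategory of `D`
determined by the collection of objects `B`. It consists of a central charge `Z`,
additive on distinguished triangles of the subcategory, and of strictly full additive
subcategories `P φ ⊆ B` for `φ ∈ ℝ` satisfying the axioms (s1)–(s4). -/
structure StabilityConditionOn (B : Set D) where
  /-- the central charge -/
  Z : D → ℂ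
  /-- the slicing -/
  P : ℝ → Set D
  P_le : ∀ φ : ℝ, P φ ⊆ B
  -- each `P φ` is a strictly full additive subcategory
  P_iso : ∀ (φ : ℝ) (X Y : D), X ∈ P φ → Nonempty (X ≅ Y) → Y ∈ P φ
  P_zero : ∀ (φ : ℝ) (X : D), IsZero X → X ∈ P φ
  P_biprod : ∀ (φ : ℝ) (X Y : D) (b : BinaryBicone X Y), b.IsBilimit →
    X ∈ P φ → Y ∈ P φ → b.pt ∈ P φ
  -- `Z` is additive on distinguished triangles of the subcategory
  Z_add : ∀ T ∈ distTriang D, T.obj₁ ∈ B → Triangle.obj₂ T ∈ B → T.obj₃ ∈ B →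
    Z (Triangle.obj₂ T) = Z T.obj₁ + Z T.obj₃
  s1 : ∀ (φ : ℝ) (E : D), E ∈ P φ → ¬ IsZero E →
    ∃ m : ℝ, 0 < m ∧ Z E = (m : ℂ) * Complex.exp ((Real.pi : ℂ) * Complex.I * (φ : ℂ))
  s2 : ∀ (φ ψ : ℝ), ψ < φ → ∀ E ∈ P φ, ∀ F ∈ P ψ, ∀ f : E ⟶ F, f = 0
  s3 : ∀ (φ : ℝ) (X : D), X ∈ P (φ + 1) ↔ ∃ Y ∈ P φ, Nonempty (X ≅ Y⟦(1 : ℤ)⟧)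
  s4 : ∀ E ∈ B, ¬ IsZero E → HasHNFiltration P E

variable {B : Set D}

/-- An object is `σ`-semistable of phase `φ` if it is a nonzero object of `P φ`. -/
def StabilityConditionOn.IsSemistable (σ : StabilityConditionOn B) (φ : ℝ) (E : D) : Prop :=
  E ∈ σ.P φ ∧ ¬ IsZero E

/-- An object is `σ`-stable if it is `σ`-semistable of some phase `φ` and is simple in
`P φ`: in any distinguished triangle `A ⟶ E ⟶ C ⟶ A[1]` with `A, C ∈ P φ`, either `A`
or `C` is zero. -/
def StabilityConditionOn.IsStable (σ : StabilityConditionOn B) (φ : ℝ) (E : D) : Prop :=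
  σ.IsSemistable φ E ∧
  ∀ (A C : D) (f : A ⟶ E) (g : E ⟶ C) (h : C ⟶ A⟦(1 : ℤ)⟧),
    (Triangle.mk f g h ∈ distTriang D) → A ∈ σ.P φ → C ∈ σ.P φ → IsZero A ∨ IsZero C

/-- `σ` has the Jordan–Hölder property: every `σ`-semistable object of phase `φ` has a
finite filtration whose successive cones are `σ`-stable of phase `φ`. -/
def StabilityConditionOn.HasJHProperty (σ : StabilityConditionOn B) : Prop :=
  ∀ (φ : ℝ) (E : D), E ∈ σ.P φ → ¬ IsZero E →
    ∃ (n : ℕ) (X : Fin (n + 1) → D) (f : ∀ i : Fin n, X i.castSucc ⟶ X i.succ),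
      IsZero (X 0) ∧ Nonempty (X (Fin.last n) ≅ E) ∧
      ∀ i : Fin n, ∃ (A : D) (g : X i.succ ⟶ A) (h : A ⟶ (X i.castSucc)⟦(1 : ℤ)⟧),
        (Triangle.mk (f i) g h ∈ distTriang D) ∧ σ.IsStable φ A

end StabilityDefs

noncomputable section

variable (A : Type u) [CommRing A] [HasDerivedCategory.{w} (ModuleCat.{u} A)]

/-- The objects of the derived category of `A`-modules belonging to `D^b(mod A)`, i.e.
those with only finitely many nonzero cohomology modules, all of them finitely
generated. -/
def DbCoh : Set (DerivedCategory (ModuleCat.{u} A)) :=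
  {E | (∃ a b : ℤ, ∀ i : ℤ, (i < a ∨ b < i) →
          IsZero ((DerivedCategory.homologyFunctor (ModuleCat.{u} A) i).obj E)) ∧
       (∀ i : ℤ, Module.Finite A
          ((DerivedCategory.homologyFunctor (ModuleCat.{u} A) i).obj E))}

/-- An `A`-module viewed as an object of the derived category, placed in degree `0`. -/
abbrev degZero (M : ModuleCat.{u} A) : DerivedCategory (ModuleCat.{u} A) :=
  (DerivedCategory.singleFunctor (ModuleCat.{u} A) 0).obj M

end

namespace StabAux

section General

open scoped ZeroObject

variable {C : Type u} [Category.{v} C] [Abelian C] [HasDerivedCategory.{w} C]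

lemma isZero_of_homology (X : DerivedCategory C)
    (h : ∀ n : ℤ, IsZero ((homologyFunctor C n).obj X)) : IsZero X := by
  have : IsIso (0 : X ⟶ (0 : DerivedCategory C)) := by
    rw [DerivedCategory.isIso_iff]
    intro n
    have h2 : IsZero ((homologyFunctor C n).obj (0 : DerivedCategory C)) :=
      Functor.map_isZero _ (isZero_zero _)
    exact ⟨⟨0, (h n).eq_of_src _ _, h2.eq_of_src _ _⟩⟩
  exact (isZero_zero _).of_iso (asIso (0 : X ⟶ (0 : DerivedCategory C)))

lemma exists_complex_hom (K L : CochainComplex C ℤ) (b : ℤ) [K.IsStrictlyLE b]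
    [L.IsStrictlyGE b] (u : K.homology b ⟶ L.homology b) :
    ∃ f : K ⟶ L, HomologicalComplex.homologyMap f b = u := by
  have hK : K.d b (b + 1) = 0 := (K.isZero_of_isStrictlyLE b (b + 1) (by lia)).eq_of_tgt _ _
  have hL : L.d (b - 1) b = 0 := (L.isZero_of_isStrictlyGE b (b - 1) (by lia)).eq_of_src _ _
  have i1 : IsIso (K.homologyι b) := K.isIso_homologyι b (b + 1) (by simp) hK
  have i2 : IsIso (L.homologyπ b) := L.isIso_homologyπ (b - 1) b (by simp) hL
  let p : K.X b ⟶ L.homology b := K.pOpcycles b ≫ inv (K.homologyι b) ≫ u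
  let q : L.homology b ⟶ L.X b := inv (L.homologyπ b) ≫ L.iCycles b
  refine ⟨HomologicalComplex.mkHomToSingle (j := b) p ?_ ≫
    HomologicalComplex.mkHomFromSingle (j := b) q ?_, ?_⟩
  · intro i _
    simp [p]
  · intro i _
    simp [q]
  · rw [← cancel_epi (K.homologyπ b), ← cancel_mono (L.homologyι b)]
    have h1 : K.iCycles b ≫ K.pOpcycles b = K.homologyπ b ≫ K.homologyι b := by simp
    have h2 : L.iCycles b ≫ L.pOpcycles b = L.homologyπ b ≫ L.homologyι b := by simp
    simp [p, q]
    rw [h2, reassoc_of% h1]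
    simp [-HomologicalComplex.homology_π_ι, -HomologicalComplex.homology_π_ι_assoc]

lemma exists_hom (E F : DerivedCategory C) (b : ℤ) [E.IsLE b] [F.IsGE b]
    (u : (homologyFunctor C b).obj E ⟶ (homologyFunctor C b).obj F) (hu : u ≠ 0) :
    ∃ f : E ⟶ F, f ≠ 0 := by
  obtain ⟨K, _, ⟨e⟩⟩ := E.exists_iso_Q_obj_of_isLE b
  obtain ⟨L, _, ⟨e'⟩⟩ := F.exists_iso_Q_obj_of_isGE b
  let a1 : (homologyFunctor C b).obj E ≅ K.homology b :=
    (homologyFunctor C b).mapIso e ≪≫ (homologyFunctorFactors C b).app K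
  let a2 : (homologyFunctor C b).obj F ≅ L.homology b :=
    (homologyFunctor C b).mapIso e' ≪≫ (homologyFunctorFactors C b).app L
  obtain ⟨f, hf⟩ := exists_complex_hom K L b (a1.inv ≫ u ≫ a2.hom)
  refine ⟨e.hom ≫ Q.map f ≫ e'.inv, fun h0 => hu ?_⟩
  have h1 : Q.map f = 0 := by
    have : Q.map f = e.inv ≫ (e.hom ≫ Q.map f ≫ e'.inv) ≫ e'.hom := by simp
    rw [this, h0]; simp
  have h2 := homologyFunctorFactors_hom_naturality f b
  rw [h1, hf, Functor.map_zero, zero_comp] at h2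
  have h3 : a1.inv ≫ u ≫ a2.hom = 0 := by
    have i3 : IsIso ((homologyFunctorFactors C b).hom.app K) := inferInstance
    exact (cancel_epi ((homologyFunctorFactors C b).hom.app K)).mp
      (h2.symm.trans comp_zero.symm)
  have : u = a1.hom ≫ (a1.inv ≫ u ≫ a2.hom) ≫ a2.inv := by simp
  rw [this, h3]; simp

end General

section Modules

variable {R : Type u} [CommRing R]

lemma exists_linearMap [IsArtinianRing R] [IsLocalRing R] (M N : Type u) [AddCommGroup M]
    [AddCommGroup N] [Module R M] [Module R N] [Module.Finite R M] [Module.Finite R N]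
    [Nontrivial M] [Nontrivial N] : ∃ u : M →ₗ[R] N, u ≠ 0 := by
  obtain ⟨P, hP, -⟩ := (eq_top_or_exists_le_coatom (⊥ : Submodule R M)).resolve_left bot_ne_top
  obtain ⟨S, hS, -⟩ := (eq_bot_or_exists_atom_le (⊤ : Submodule R N)).resolve_left top_ne_bot
  have h1 : IsSimpleModule R (M ⧸ P) := isSimpleModule_iff_isCoatom.mpr hP
  have h2 : IsSimpleModule R S := isSimpleModule_iff_isAtom.mpr hS
  obtain ⟨I, hI, ⟨e⟩⟩ := isSimpleModule_iff_quot_maximal.mp h1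
  obtain ⟨J, hJ, ⟨e'⟩⟩ := isSimpleModule_iff_quot_maximal.mp h2
  obtain rfl := IsLocalRing.eq_maximalIdeal hI
  obtain rfl := IsLocalRing.eq_maximalIdeal hJ
  let v : M →ₗ[R] S := (e.trans e'.symm).toLinearMap ∘ₗ P.mkQ
  have hv : Function.Surjective v := (e.trans e'.symm).surjective.comp P.mkQ_surjective
  refine ⟨S.subtype ∘ₗ v, fun h => ?_⟩
  have : Nontrivial S := IsSimpleModule.nontrivial R S
  obtain ⟨s, hs⟩ := exists_ne (0 : S)
  obtain ⟨m, rfl⟩ := hv s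
  exact hs (Subtype.ext (by simpa using LinearMap.congr_fun h m))

lemma exists_modHom [IsArtinianRing R] [IsLocalRing R] (M N : ModuleCat.{u} R)
    [Module.Finite R M] [Module.Finite R N] (hM : ¬ IsZero M) (hN : ¬ IsZero N) :
    ∃ u : M ⟶ N, u ≠ 0 := by
  have : Nontrivial M := by
    rw [← not_subsingleton_iff_nontrivial]
    exact fun h => hM (ModuleCat.isZero_of_subsingleton M)
  have : Nontrivial N := by
    rw [← not_subsingleton_iff_nontrivial]
    exact fun h => hN (ModuleCat.isZero_of_subsingleton N)
  obtain ⟨u, hu⟩ := exists_linearMap (R := R) M N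
  refine ⟨ModuleCat.ofHom u, fun h => hu ?_⟩
  simpa using congrArg ModuleCat.Hom.hom h

end Modules

section Stab

variable {R : Type u} [CommRing R] [HasDerivedCategory.{w} (ModuleCat.{u} R)]

lemma shift_mem (σ : StabilityConditionOn (DbCoh R)) (φ : ℝ)
    (F : DerivedCategory (ModuleCat.{u} R)) (hF : F ∈ σ.P φ) (n : ℤ) :
    F⟦n⟧ ∈ σ.P (φ + n) := by
  induction n using Int.induction_on with
  | zero =>
    have := σ.P_iso φ F (F⟦(0 : ℤ)⟧) hF ⟨((shiftFunctorZero _ ℤ).app F).symm⟩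
    simpa using this
  | succ i ih =>
    have h := (σ.s3 (φ + (i : ℤ)) (F⟦((i : ℤ) + 1)⟧)).mpr
      ⟨_, ih, ⟨(shiftFunctorAdd _ (i : ℤ) (1 : ℤ)).app F⟩⟩
    have e : φ + (((i : ℤ) + 1 : ℤ) : ℝ) = φ + ((i : ℤ) : ℝ) + 1 := by push_cast; ring
    rw [e]; exact h
  | pred i ih =>
    have e : φ + ((-(i : ℤ) : ℤ) : ℝ) = (φ + ((-(i : ℤ) - 1 : ℤ) : ℝ)) + 1 := by
      push_cast; ring
    rw [e] at ih
    obtain ⟨Y, hY, ⟨a⟩⟩ := (σ.s3 _ _).mp ih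
    refine σ.P_iso _ Y _ hY ⟨?_⟩
    exact ((shiftFunctorCompIsoId _ (1 : ℤ) (-1) (by simp)).app Y).symm ≪≫
      (shiftFunctor _ (-1 : ℤ)).mapIso a.symm ≪≫
      ((shiftFunctorAdd' _ (-(i : ℤ)) (-1 : ℤ) (-(i : ℤ) - 1) (by lia)).app F).symm

variable [IsArtinianRing R] [IsLocalRing R]

noncomputable abbrev H (n : ℤ) (E : DerivedCategory (ModuleCat.{u} R)) : ModuleCat.{u} R :=
  (homologyFunctor (ModuleCat.{u} R) n).obj E

lemma key (σ : StabilityConditionOn (DbCoh R)) {φ ψ : ℝ}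
    {E F : DerivedCategory (ModuleCat.{u} R)} (hE : E ∈ σ.P φ) (hF : F ∈ σ.P ψ)
    {a b : ℤ} (hb : ¬ IsZero (H b E)) (hb' : ∀ i, b < i → IsZero (H i E))
    (ha : ¬ IsZero (H a F)) (ha' : ∀ i, i < a → IsZero (H i F)) :
    φ + b ≤ ψ + a := by
  by_contra hlt
  push Not at hlt
  have iso : ∀ i j : ℤ, (a - b) + i = j → (H i (F⟦a - b⟧) ≅ H j F) := fun i j hij =>
    ((homologyFunctor (ModuleCat.{u} R) 0).shiftIso (a - b) i j hij).app F
  have : E.IsLE b := (isLE_iff _ _).mpr hb'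
  have : (F⟦a - b⟧).IsGE b := (isGE_iff _ _).mpr fun i hi =>
    (ha' (a - b + i) (by lia)).of_iso (iso i _ rfl)
  have : Module.Finite R (H b E) := (σ.P_le _ hE).2 b
  have : Module.Finite R (H a F) := (σ.P_le _ hF).2 a
  obtain ⟨u, hu⟩ := exists_modHom (H b E) (H a F) hb ha
  obtain ⟨f, hf⟩ := exists_hom E (F⟦a - b⟧) b (u ≫ (iso b a (by lia)).inv) (by
    intro h
    apply hu
    rw [← cancel_mono (iso b a (by lia)).inv, h, zero_comp])
  refine hf (σ.s2 φ (ψ + ((a - b : ℤ) : ℝ)) ?_ E hE _ (shift_mem σ ψ F hF (a - b)) f)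
  push_cast
  linarith

lemma exists_top {E : DerivedCategory (ModuleCat.{u} R)} (hE : E ∈ DbCoh R) {i : ℤ}
    (hi : ¬ IsZero (H i E)) :
    ∃ b, i ≤ b ∧ ¬ IsZero (H b E) ∧ ∀ j, b < j → IsZero (H j E) := by
  obtain ⟨⟨a, b, hab⟩, -⟩ := hE
  obtain ⟨t, ht, ht'⟩ := Int.exists_greatest_of_bdd (P := fun j => ¬ IsZero (H j E))
    ⟨b, fun z hz => by by_contra h; exact hz (hab z (Or.inr (by lia)))⟩ ⟨i, hi⟩
  exact ⟨t, ht' i hi, ht, fun j hj => by by_contra h; have := ht' j h; lia⟩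

lemma exists_bot {E : DerivedCategory (ModuleCat.{u} R)} (hE : E ∈ DbCoh R) {i : ℤ}
    (hi : ¬ IsZero (H i E)) :
    ∃ b, b ≤ i ∧ ¬ IsZero (H b E) ∧ ∀ j, j < b → IsZero (H j E) := by
  obtain ⟨⟨a, b, hab⟩, -⟩ := hE
  obtain ⟨t, ht, ht'⟩ := Int.exists_least_of_bdd (P := fun j => ¬ IsZero (H j E))
    ⟨a, fun z hz => by by_contra h; exact hz (hab z (Or.inl (by lia)))⟩ ⟨i, hi⟩
  exact ⟨t, ht' i hi, ht, fun j hj => by by_contra h; have := ht' j h; lia⟩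

lemma deg_le (σ : StabilityConditionOn (DbCoh R)) {φ ψ : ℝ}
    {E F : DerivedCategory (ModuleCat.{u} R)} (hE : E ∈ σ.P φ) (hF : F ∈ σ.P ψ)
    {i j : ℤ} (hi : ¬ IsZero (H i E)) (hj : ¬ IsZero (H j F)) : φ + i ≤ ψ + j := by
  obtain ⟨b, hb, hb1, hb2⟩ := exists_top (σ.P_le _ hE) hi
  obtain ⟨a, ha, ha1, ha2⟩ := exists_bot (σ.P_le _ hF) hj
  have := key σ hE hF hb1 hb2 ha1 ha2
  have h1 : (i : ℝ) ≤ b := by exact_mod_cast hb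
  have h2 : (a : ℝ) ≤ j := by exact_mod_cast ha
  linarith

lemma isZero_mid {X Y : DerivedCategory (ModuleCat.{u} R)}
    {Z : DerivedCategory (ModuleCat.{u} R)} {f : X ⟶ Y} {g : Y ⟶ Z} {h : Z ⟶ X⟦(1 : ℤ)⟧}
    (hT : Triangle.mk f g h ∈ distTriang _) (j : ℤ) (hX : IsZero (H j X))
    (hZ : IsZero (H j Z)) : IsZero (H j Y) :=
  (HomologySequence.exact₂ _ hT j).isZero_of_both_zeros (hX.eq_of_src _ _) (hZ.eq_of_tgt _ _)

lemma isZero_right {X Y : DerivedCategory (ModuleCat.{u} R)}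
    {Z : DerivedCategory (ModuleCat.{u} R)} {f : X ⟶ Y} {g : Y ⟶ Z} {h : Z ⟶ X⟦(1 : ℤ)⟧}
    (hT : Triangle.mk f g h ∈ distTriang _) (j : ℤ) (hY : IsZero (H j Y))
    (hX : IsZero (H (j + 1) X)) : IsZero (H j Z) :=
  (HomologySequence.exact₃ _ hT j (j + 1) rfl).isZero_of_both_zeros
    (hY.eq_of_src _ _) (hX.eq_of_tgt _ _)

lemma isZero_left {X Y : DerivedCategory (ModuleCat.{u} R)}
    {Z : DerivedCategory (ModuleCat.{u} R)} {f : X ⟶ Y} {g : Y ⟶ Z} {h : Z ⟶ X⟦(1 : ℤ)⟧}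
    (hT : Triangle.mk f g h ∈ distTriang _) (j : ℤ) (hZ : IsZero (H (j - 1) Z))
    (hY : IsZero (H j Y)) : IsZero (H j X) :=
  (HomologySequence.exact₁ _ hT (j - 1) j (by lia)).isZero_of_both_zeros
    (hZ.eq_of_src _ _) (hY.eq_of_tgt _ _)

/-- A nonzero object of `D^b` with cohomology in degree zero only is semistable. -/
lemma semistable (σ : StabilityConditionOn (DbCoh R))
    (K : DerivedCategory (ModuleCat.{u} R)) (hK : K ∈ DbCoh R) (h0 : ¬ IsZero K)
    (hdeg : ∀ j : ℤ, j ≠ 0 → IsZero (H j K)) : ∃ φ, K ∈ σ.P φ := by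
  obtain ⟨n, X, f, φ, hX0, ⟨e⟩, hφ, hA⟩ := σ.s4 K hK h0
  obtain _ | m := n
  · exact absurd (hX0.of_iso e.symm) h0
  choose A g h hT hAz hAP using hA
  obtain ⟨d, hd⟩ : ∃ d, ¬ IsZero (H d (A (Fin.last m))) := by
    by_contra hc
    push Not at hc
    exact hAz _ (isZero_of_homology _ hc)
  have hdegA : ∀ (i : Fin (m + 1)) (j : ℤ), φ i + j ≠ φ (Fin.last m) + d → IsZero (H j (A i)) := by
    intro i j hne
    by_contra hc
    exact hne (le_antisymm (deg_le σ (hAP i) (hAP _) hc hd) (deg_le σ (hAP _) (hAP i) hd hc))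
  have hdegX : ∀ (i : Fin (m + 2)) (j : ℤ),
      (∀ l : Fin (m + 1), l.castSucc < i → φ l + j ≠ φ (Fin.last m) + d) →
      IsZero (H j (X i)) := by
    intro i
    induction i using Fin.induction with
    | zero => intro j _; exact Functor.map_isZero _ hX0
    | succ i ih =>
      intro j hj
      refine isZero_mid (hT i) j (ih j fun l hl => hj l (hl.trans ?_)) (hdegA i j (hj i ?_))
      all_goals exact Fin.castSucc_lt_succ
  have hge : ∀ j, d ≤ j → IsZero (H j (X (Fin.last m).castSucc)) := by
    intro j hj
    refine hdegX _ j fun l hl => ne_of_gt ?_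
    have h1 : φ (Fin.last m) < φ l := hφ (by simpa using hl)
    have h2 : (d : ℝ) ≤ j := by exact_mod_cast hj
    linarith
  have hXK : ∀ j, j ≠ 0 → IsZero (H j (X (Fin.last m).succ)) := fun j hj =>
    (hdeg j hj).of_iso ((homologyFunctor _ j).mapIso e)
  have hd0 : d = 0 := by
    by_contra hne
    exact hd (isZero_right (hT (Fin.last m)) d (hXK d hne) (hge _ (by lia)))
  have hz : IsZero (X (Fin.last m).castSucc) := by
    refine isZero_of_homology _ fun j => ?_
    by_cases hj : d ≤ j
    · exact hge j hj
    · refine isZero_left (hT (Fin.last m)) j (hdegA _ _ ?_) (hXK j (by lia))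
      have : ((j - 1 : ℤ) : ℝ) < d := by exact_mod_cast (by lia : j - 1 < d)
      intro heq
      linarith
  have : IsIso (g (Fin.last m)) :=
    (Triangle.isZero₁_iff_isIso₂ _ (hT (Fin.last m))).mp hz
  exact ⟨φ (Fin.last m), σ.P_iso _ _ _ (hAP _) ⟨(asIso (g (Fin.last m))).symm ≪≫ e⟩⟩

lemma stable (σ : StabilityConditionOn (DbCoh R))
    (K : DerivedCategory (ModuleCat.{u} R)) (hK : K ∈ DbCoh R)
    (hs : Simple (H 0 K))
    (hdeg : ∀ j : ℤ, j ≠ 0 → IsZero (H j K)) : ∃ φ, σ.IsStable φ K := by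
  have hH : ¬ IsZero (H 0 K) := Simple.not_isZero _
  have h0 : ¬ IsZero K := fun h => hH (Functor.map_isZero _ h)
  obtain ⟨φ, hφ⟩ := semistable σ K hK h0 hdeg
  refine ⟨φ, ⟨hφ, h0⟩, ?_⟩
  intro A C f g h hT hA hC
  have hz : ∀ E ∈ σ.P φ, ∀ j : ℤ, j ≠ 0 → IsZero (H j E) := by
    intro E hE j hj
    by_contra hc
    have h1 := deg_le σ hE hφ hc hH
    have h2 := deg_le σ hφ hE hH hc
    have : (j : ℝ) = ((0 : ℤ) : ℝ) := by linarith
    exact hj (by exact_mod_cast this)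
  have hmono : Mono ((homologyFunctor (ModuleCat.{u} R) 0).map f) :=
    (HomologySequence.mono_homologyMap_mor₁_iff _ hT (-1) 0 (by lia)).mpr
      ((hz C hC (-1) (by lia)).eq_of_src _ _)
  by_cases hf : (homologyFunctor (ModuleCat.{u} R) 0).map f = 0
  · left
    refine isZero_of_homology _ fun j => ?_
    by_cases hj : j = 0
    · subst hj
      exact IsZero.of_mono_eq_zero _ hf
    · exact hz A hA j hj
  · right
    have := isIso_of_mono_of_nonzero hf
    refine isZero_of_homology _ fun j => ?_
    by_cases hj : j = 0
    · subst hj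
      have hg : (homologyFunctor (ModuleCat.{u} R) 0).map g = 0 :=
        (HomologySequence.epi_homologyMap_mor₁_iff _ hT 0).mp (inferInstanceAs (Epi ((homologyFunctor (ModuleCat.{u} R) 0).map f)))
      have hepi : Epi ((homologyFunctor (ModuleCat.{u} R) 0).map g) :=
        (HomologySequence.epi_homologyMap_mor₂_iff _ hT 0 1 (by lia)).mpr
          ((hz A hA 1 (by lia)).eq_of_tgt _ _)
      exact IsZero.of_epi_eq_zero _ hg
    · exact hz C hC j hj

end Stab

end StabAux

/-- For any stability condition `σ` on `D^b(mod R)`, `R` an Artinian local commutative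
ring, having the Jordan–Hölder property, the residue field `k = R/𝔪`, viewed as a
complex concentrated in degree `0`, is `σ`-stable. -/
theorem stmt7 (R : Type u) [CommRing R] [IsArtinianRing R] [IsLocalRing R]
    [HasDerivedCategory.{w} (ModuleCat.{u} R)]
    (σ : StabilityConditionOn (DbCoh R)) (hJH : σ.HasJHProperty) :
    ∃ φ : ℝ, σ.IsStable φ
      (degZero R (ModuleCat.of R (R ⧸ IsLocalRing.maximalIdeal R))) := by
  let k : ModuleCat.{u} R := ModuleCat.of R (R ⧸ IsLocalRing.maximalIdeal R)
  have hz : ∀ j : ℤ, j ≠ 0 → IsZero (StabAux.H j (degZero R k)) := by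
    intro j hj
    rcases lt_or_gt_of_ne hj with h | h
    · exact isZero_of_isGE _ 0 j h
    · exact isZero_of_isLE _ 0 j h
  let e : StabAux.H 0 (degZero R k) ≅ k :=
    (homologyFunctor (ModuleCat.{u} R) 0).mapIso
      ((singleFunctorIsoCompQ (ModuleCat.{u} R) 0).app k) ≪≫
    (homologyFunctorFactors (ModuleCat.{u} R) 0).app _ ≪≫
    (HomologicalComplex.homologyFunctorSingleIso (ModuleCat.{u} R) (ComplexShape.up ℤ) 0).app k
  have hs : IsSimpleModule R k :=
    isSimpleModule_iff_quot_maximal.mpr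
      ⟨IsLocalRing.maximalIdeal R, inferInstance, ⟨LinearEquiv.refl R _⟩⟩
  have hs' : Simple k := simple_of_isSimpleModule
  refine StabAux.stable σ (degZero R k) ⟨⟨0, 0, fun i hi => hz i (by lia)⟩, fun i => ?_⟩
    (Simple.of_iso e) hz
  by_cases hi : i = 0
  · subst hi
    have : Module.Finite R k :=
      inferInstanceAs (Module.Finite R (R ⧸ IsLocalRing.maximalIdeal R))
    exact Module.Finite.equiv e.toLinearEquiv.symm
  · have := ModuleCat.subsingleton_of_isZero (hz i hi)
    infer_instance
end

section
/- Let (R, 𝔪) be a commutative Artinian local ring with residue field k = R/𝔪. For any stability condition σ = (Z, P) on D^b(R) = D^b(mod R) having the Jordan–Hölder property, there exists φ₀ ∈ ℝ such that every nonzero finitely generated R-module, viewed as an object of D^b(mod R) concentrated in degree 0, lies in P(φ₀); in particular, every nonzero finitely generated R-module is σ-semistable and all of them have the same phase. -/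
open CategoryTheory Limits Pretriangulated DerivedCategory

universe w v u

namespace Stmt8Aux

section Shift

variable {D : Type*} [Category D] [HasZeroObject D] [Preadditive D] [HasShift D ℤ]
  [∀ n : ℤ, (CategoryTheory.shiftFunctor D n).Additive] [Pretriangulated D] {B : Set D}

lemma P_shift (σ : StabilityConditionOn B) (φ : ℝ) (Y : D) (hY : Y ∈ σ.P φ) (n : ℤ) :
    Y⟦n⟧ ∈ σ.P (φ + n) := by
  induction n using Int.induction_on with
  | zero =>
    have : σ.P (φ + ((0 : ℤ) : ℝ)) = σ.P φ := by simp
    rw [this]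
    exact σ.P_iso _ _ _ hY ⟨((shiftFunctorZero D ℤ).app Y).symm⟩
  | succ n ih =>
    have : φ + (((n : ℤ) + 1 : ℤ) : ℝ) = (φ + ((n : ℤ) : ℝ)) + 1 := by push_cast; ring
    rw [this, σ.s3]
    exact ⟨_, ih, ⟨(shiftFunctorAdd D (n : ℤ) 1).app Y⟩⟩
  | pred n ih =>
    have : φ + ((-(n : ℤ) : ℤ) : ℝ) = (φ + ((-(n : ℤ) - 1 : ℤ) : ℝ)) + 1 := by push_cast; ring
    rw [this, σ.s3] at ih
    obtain ⟨W, hW, ⟨e⟩⟩ := ih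
    refine σ.P_iso _ _ _ hW ⟨?_⟩
    exact ((shiftFunctorCompIsoId D (1 : ℤ) (-1) (by lia)).app W).symm ≪≫
      (shiftFunctor D (-1 : ℤ)).mapIso e.symm ≪≫
      ((shiftFunctorAdd' D (-(n : ℤ)) (-1) (-(n : ℤ) - 1) (by lia)).app Y).symm

end Shift

section General

variable {C : Type u} [Category.{v} C] [Abelian C] [HasDerivedCategory.{w} C]

lemma isZero_of_homology (X : DerivedCategory C)
    (h : ∀ i, IsZero ((homologyFunctor C i).obj X)) : IsZero X := by
  have h1 : X.IsLE 0 := (isLE_iff X 0).2 fun i _ => h i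
  have h2 : X.IsGE 1 := (isGE_iff X 1).2 fun i _ => h i
  exact TStructure.t.isZero X 0 1

/-- top cohomology projection -/
lemma exists_top (E : DerivedCategory C) (b : ℤ) (hE : E.IsLE b) :
    ∃ (M : C) (f : E ⟶ (singleFunctor C b).obj M),
      IsIso ((homologyFunctor C b).map f) := by
  obtain ⟨X, Y, hX, hY, f, g, h, hT⟩ := TStructure.t.exists_triangle E (b - 1) b (by lia)
  rw [TStructure.t.le_iff_isLE] at hX
  rw [TStructure.t.ge_iff_isGE] at hY
  have hX' := (isLE_iff X (b-1)).1 hX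
  have hE' := (isLE_iff E b).1 hE
  have hYLE : Y.IsLE b := by
    rw [isLE_iff]
    intro i hi
    exact (HomologySequence.exact₃ _ hT i (i+1)).isZero_of_both_zeros
      ((hE' i hi).eq_of_src _ _) ((hX' (i+1) (by lia)).eq_of_tgt _ _)
  have hepi : Epi ((homologyFunctor C b).map g) :=
    (HomologySequence.epi_homologyMap_mor₂_iff _ hT b (b+1)).2
      ((hX' (b+1) (by lia)).eq_of_tgt _ _)
  have hmono : Mono ((homologyFunctor C b).map g) :=
    (HomologySequence.mono_homologyMap_mor₂_iff _ hT b).2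
      ((hX' b (by lia)).eq_of_src _ _)
  have : IsIso ((homologyFunctor C b).map g) := isIso_of_mono_of_epi _
  obtain ⟨M, ⟨e⟩⟩ := exists_iso_singleFunctor_obj_of_isGE_of_isLE Y b
  refine ⟨M, g ≫ e.hom, ?_⟩
  rw [Functor.map_comp]
  infer_instance

/-- bottom cohomology inclusion -/
lemma exists_bot (E : DerivedCategory C) (b : ℤ) (hE : E.IsGE b) :
    ∃ (M : C) (f : (singleFunctor C b).obj M ⟶ E),
      IsIso ((homologyFunctor C b).map f) := by
  obtain ⟨X, Y, hX, hY, f, g, h, hT⟩ := TStructure.t.exists_triangle E b (b + 1) (by lia)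
  rw [TStructure.t.le_iff_isLE] at hX
  rw [TStructure.t.ge_iff_isGE] at hY
  have hY' := (isGE_iff Y (b+1)).1 hY
  have hE' := (isGE_iff E b).1 hE
  have hXGE : X.IsGE b := by
    rw [isGE_iff]
    intro i hi
    exact (HomologySequence.exact₁ _ hT (i-1) i).isZero_of_both_zeros
      ((hY' (i-1) (by lia)).eq_of_src _ _) ((hE' i (by lia)).eq_of_tgt _ _)
  have hepi : Epi ((homologyFunctor C b).map f) :=
    (HomologySequence.epi_homologyMap_mor₁_iff _ hT b).2
      ((hY' b (by lia)).eq_of_tgt _ _)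
  have hmono : Mono ((homologyFunctor C b).map f) :=
    (HomologySequence.mono_homologyMap_mor₁_iff _ hT (b-1) b).2
      ((hY' (b-1) (by lia)).eq_of_src _ _)
  have : IsIso ((homologyFunctor C b).map f) := isIso_of_mono_of_epi _
  obtain ⟨M, ⟨e⟩⟩ := exists_iso_singleFunctor_obj_of_isGE_of_isLE X b
  refine ⟨M, e.inv ≫ f, ?_⟩
  rw [Functor.map_comp]
  infer_instance

end General

section Ring

variable {R : Type u} [CommRing R] [IsArtinianRing R] [IsLocalRing R]

lemma exists_ne_zero_hom (M N : ModuleCat.{u} R) (hM : Module.Finite R M) (hM0 : Nontrivial M)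
    (hN0 : Nontrivial N) : ∃ f : M ⟶ N, f ≠ 0 := by
  obtain ⟨P, hP, -⟩ := (eq_top_or_exists_le_coatom (⊥ : Submodule R M)).resolve_left bot_ne_top
  obtain ⟨x, hx⟩ := exists_ne (0 : N)
  let L : Submodule R N := Submodule.span R {x}
  have hLn : Nontrivial L := Submodule.nontrivial_span_singleton hx
  obtain ⟨S, hS, -⟩ := (eq_bot_or_exists_atom_le (⊤ : Submodule R L)).resolve_left top_ne_bot
  have h1 : IsSimpleModule R (M ⧸ P) := isSimpleModule_iff_isCoatom.2 hP
  have h2 : IsSimpleModule R S := isSimpleModule_iff_isAtom.2 hS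
  obtain ⟨I, hI, ⟨eI⟩⟩ := isSimpleModule_iff_quot_maximal.1 h1
  obtain ⟨J, hJ, ⟨eJ⟩⟩ := isSimpleModule_iff_quot_maximal.1 h2
  obtain rfl : I = J := (IsLocalRing.eq_maximalIdeal hI).trans (IsLocalRing.eq_maximalIdeal hJ).symm
  let f : M →ₗ[R] N :=
    L.subtype ∘ₗ S.subtype ∘ₗ (eI.trans eJ.symm).toLinearMap ∘ₗ P.mkQ
  refine ⟨ModuleCat.ofHom f, fun h => ?_⟩
  have hf : f = 0 := by
    have := congrArg ModuleCat.Hom.hom h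
    simpa using this
  apply hP.1
  rw [eq_top_iff]
  intro m _
  have hm : f m = 0 := by rw [hf]; rfl
  simpa [f] using hm

variable [HasDerivedCategory.{w} (ModuleCat.{u} R)]

lemma exists_hom (E F : DerivedCategory (ModuleCat.{u} R)) (b : ℤ) (hE : E.IsLE b)
    (hF : F.IsGE b)
    (hEf : Module.Finite R ((homologyFunctor (ModuleCat.{u} R) b).obj E))
    (hE0 : ¬ IsZero ((homologyFunctor (ModuleCat.{u} R) b).obj E))
    (hF0 : ¬ IsZero ((homologyFunctor (ModuleCat.{u} R) b).obj F)) :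
    ∃ f : E ⟶ F, f ≠ 0 := by
  obtain ⟨M, f, hf⟩ := exists_top E b hE
  obtain ⟨N, g, hg⟩ := exists_bot F b hF
  let eM : (homologyFunctor (ModuleCat.{u} R) b).obj E ≅ M :=
    asIso ((homologyFunctor (ModuleCat.{u} R) b).map f) ≪≫
      (singleFunctorCompHomologyFunctorIso (ModuleCat.{u} R) b).app M
  let eN : (homologyFunctor (ModuleCat.{u} R) b).obj F ≅ N :=
    (asIso ((homologyFunctor (ModuleCat.{u} R) b).map g)).symm ≪≫
      (singleFunctorCompHomologyFunctorIso (ModuleCat.{u} R) b).app N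
  have hM : Module.Finite R M := Module.Finite.equiv eM.toLinearEquiv
  have hM0 : Nontrivial M := by
    by_contra h
    rw [not_nontrivial_iff_subsingleton] at h
    exact hE0 ((ModuleCat.isZero_of_subsingleton M).of_iso eM)
  have hN0 : Nontrivial N := by
    by_contra h
    rw [not_nontrivial_iff_subsingleton] at h
    exact hF0 ((ModuleCat.isZero_of_subsingleton N).of_iso eN)
  obtain ⟨p, hp⟩ := exists_ne_zero_hom M N hM hM0 hN0
  refine ⟨f ≫ (singleFunctor _ b).map p ≫ g, fun h => hp ?_⟩
  have h2 := congrArg (homologyFunctor (ModuleCat.{u} R) b).map h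
  rw [Functor.map_comp, Functor.map_comp, Functor.map_zero] at h2
  have h3 : (homologyFunctor (ModuleCat.{u} R) b).map ((singleFunctor _ b).map p) = 0 := by
    rw [← cancel_epi ((homologyFunctor (ModuleCat.{u} R) b).map f),
      ← cancel_mono ((homologyFunctor (ModuleCat.{u} R) b).map g)]
    simpa using h2
  have h4 := (singleFunctorCompHomologyFunctorIso (ModuleCat.{u} R) b).hom.naturality p
  simp only [Functor.comp_map, h3, zero_comp, Functor.id_map] at h4
  rw [← cancel_epi ((singleFunctorCompHomologyFunctorIso (ModuleCat.{u} R) b).hom.app M)]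
  simpa using h4.symm

lemma exists_max (E : DerivedCategory (ModuleCat.{u} R)) (hE : E ∈ DbCoh R) (h0 : ¬ IsZero E) :
    ∃ b : ℤ, E.IsLE b ∧ ¬ IsZero ((homologyFunctor (ModuleCat.{u} R) b).obj E) := by
  obtain ⟨⟨a, b, hab⟩, -⟩ := hE
  have hne : ∃ i, ¬ IsZero ((homologyFunctor (ModuleCat.{u} R) i).obj E) := by
    by_contra! h
    exact h0 (isZero_of_homology E h)
  obtain ⟨m, hm, hmax⟩ := Int.exists_greatest_of_bdd
    (P := fun i => ¬ IsZero ((homologyFunctor (ModuleCat.{u} R) i).obj E))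
    ⟨b, fun i hi => by by_contra hh; exact hi (hab i (Or.inr (by lia)))⟩ hne
  refine ⟨m, (isLE_iff E m).2 fun i hi => ?_, hm⟩
  by_contra hh
  have := hmax i hh
  lia

lemma exists_min (E : DerivedCategory (ModuleCat.{u} R)) (hE : E ∈ DbCoh R) (h0 : ¬ IsZero E) :
    ∃ b : ℤ, E.IsGE b ∧ ¬ IsZero ((homologyFunctor (ModuleCat.{u} R) b).obj E) := by
  obtain ⟨⟨a, b, hab⟩, -⟩ := hE
  have hne : ∃ i, ¬ IsZero ((homologyFunctor (ModuleCat.{u} R) i).obj E) := by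
    by_contra! h
    exact h0 (isZero_of_homology E h)
  obtain ⟨m, hm, hmax⟩ := Int.exists_least_of_bdd
    (P := fun i => ¬ IsZero ((homologyFunctor (ModuleCat.{u} R) i).obj E))
    ⟨a, fun i hi => by by_contra hh; exact hi (hab i (Or.inl (by lia)))⟩ hne
  refine ⟨m, (isGE_iff E m).2 fun i hi => ?_, hm⟩
  by_contra hh
  have := hmax i hh
  lia

lemma phase_le (σ : StabilityConditionOn (DbCoh R)) (φ ψ : ℝ)
    (E F : DerivedCategory (ModuleCat.{u} R)) (hE : E ∈ σ.P φ) (hF : F ∈ σ.P ψ) (a b : ℤ)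
    (hEb : E.IsLE b) (hFa : F.IsGE a)
    (hE0 : ¬ IsZero ((homologyFunctor (ModuleCat.{u} R) b).obj E))
    (hF0 : ¬ IsZero ((homologyFunctor (ModuleCat.{u} R) a).obj F)) :
    φ + b ≤ ψ + a := by
  have hFs := P_shift σ ψ F hF (a - b)
  have hGE : (F⟦a - b⟧).IsGE b := TStructure.t.isGE_shift F a (a - b) b
  have hne : ¬ IsZero ((homologyFunctor (ModuleCat.{u} R) b).obj (F⟦a - b⟧)) := fun h =>
    hF0 (h.of_iso (((homologyFunctor (ModuleCat.{u} R) 0).shiftIso (a - b) b a (by lia)).app F).symm)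
  obtain ⟨f, hf⟩ := exists_hom E (F⟦a - b⟧) b hEb hGE ((σ.P_le φ hE).2 b) hE0 hne
  by_contra! hlt
  refine hf (σ.s2 φ _ ?_ E hE _ hFs f)
  push_cast
  linarith

/-- Semistable objects are concentrated in one degree, determined by the phase. -/
lemma exists_phase (σ : StabilityConditionOn (DbCoh R))
    (φ : ℝ) (E : DerivedCategory (ModuleCat.{u} R)) (hE : E ∈ σ.P φ) (h0 : ¬ IsZero E) :
    ∃ d : ℤ, E.IsLE d ∧ E.IsGE d ∧ ¬ IsZero ((homologyFunctor (ModuleCat.{u} R) d).obj E) := by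
  obtain ⟨b, hb, hb0⟩ := exists_max E (σ.P_le φ hE) h0
  obtain ⟨a, ha, ha0⟩ := exists_min E (σ.P_le φ hE) h0
  have h1 := phase_le σ φ φ E E hE hE a b hb ha hb0 ha0
  have h2 : b ≤ a := by
    have : (b : ℝ) ≤ a := by linarith
    exact_mod_cast this
  exact ⟨b, hb, TStructure.t.isGE_of_ge E b a h2, hb0⟩

lemma degZero_mem (M : ModuleCat.{u} R) (hM : Module.Finite R M) : degZero R M ∈ DbCoh R := by
  have h1 : (degZero R M).IsLE 0 := inferInstance
  have h2 : (degZero R M).IsGE 0 := inferInstance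
  rw [isLE_iff] at h1
  rw [isGE_iff] at h2
  refine ⟨⟨0, 0, fun i hi => hi.elim (h2 i) (h1 i)⟩, fun i => ?_⟩
  rcases lt_trichotomy i 0 with h | h | h
  · have := ModuleCat.subsingleton_of_isZero (h2 i h)
    infer_instance
  · subst h
    have hM' : Module.Finite R ((𝟭 (ModuleCat.{u} R)).obj M) := hM
    exact Module.Finite.equiv
      ((singleFunctorCompHomologyFunctorIso (ModuleCat.{u} R) 0).app M).symm.toLinearEquiv
  · have := ModuleCat.subsingleton_of_isZero (h1 i h)
    infer_instance

lemma degZero_ne (M : ModuleCat.{u} R) (hM : Nontrivial M) : ¬ IsZero (degZero R M) := by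
  intro h
  have h1 := Functor.map_isZero (homologyFunctor (ModuleCat.{u} R) 0) h
  have h2 : IsZero M :=
    h1.of_iso ((singleFunctorCompHomologyFunctorIso (ModuleCat.{u} R) 0).app M).symm
  have := ModuleCat.subsingleton_of_isZero h2
  exact not_subsingleton M this

lemma main (σ : StabilityConditionOn (DbCoh R)) (φ₀ : ℝ)
    (h₀ : ∀ (φ : ℝ) (E : DerivedCategory (ModuleCat.{u} R)), E ∈ σ.P φ → ¬ IsZero E →
      ∃ d : ℤ, E.IsLE d ∧ E.IsGE d ∧ ¬ IsZero ((homologyFunctor (ModuleCat.{u} R) d).obj E) ∧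
        φ + d = φ₀)
    (M : DerivedCategory (ModuleCat.{u} R)) (hM : M ∈ DbCoh R) (hM0 : ¬ IsZero M)
    (hLE : M.IsLE 0) (hGE : M.IsGE 0) : M ∈ σ.P φ₀ := by
  obtain ⟨n, X, f, φ, hX0, ⟨e⟩, hφ, hA⟩ := σ.s4 M hM hM0
  choose A g h hT hA0 hAP using hA
  choose d hdLE hdGE hd0 hd using fun i => h₀ _ _ (hAP i) (hA0 i)
  have hmono : ∀ i j, i < j → d i < d j := by
    intro i j hij
    have h1 := hφ hij
    have h2 := hd i
    have h3 := hd j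
    have : (d i : ℝ) < d j := by linarith
    exact_mod_cast this
  -- upper bounds along the filtration
  have key : ∀ (m : ℕ) (hm : m < n) (j : ℤ), d ⟨m, hm⟩ ≤ j →
      IsZero ((homologyFunctor (ModuleCat.{u} R) j).obj (X (Fin.castSucc ⟨m, hm⟩))) := by
    intro m
    induction m with
    | zero =>
      intro hm j _
      exact Functor.map_isZero _ hX0
    | succ m ih =>
      intro hm j hj
      have hlt := hmono ⟨m, by lia⟩ ⟨m + 1, hm⟩ (by simp)
      have := (isLE_iff _ _).1 (hdLE ⟨m, by lia⟩) j (by lia)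
      exact (HomologySequence.exact₂ _ (hT ⟨m, by lia⟩) j).isZero_of_both_zeros
        ((ih (by lia) j (by lia)).eq_of_src _ _) (this.eq_of_tgt _ _)
  obtain _ | n := n
  · exact absurd (hX0.of_iso e.symm) hM0
  let l : Fin (n + 1) := Fin.last n
  have e' : X l.succ ≅ M := e
  have hLE' := (isLE_iff _ _).1 (TStructure.t.isLE_of_iso e'.symm 0)
  have hGE' := (isGE_iff _ _).1 (TStructure.t.isGE_of_iso e'.symm 0)
  have hk := key n (by lia)
  change ∀ j, d l ≤ j → IsZero ((homologyFunctor (ModuleCat.{u} R) j).obj (X l.castSucc)) at hk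
  have hnz : ¬ IsZero ((homologyFunctor (ModuleCat.{u} R) (d l)).obj (X l.succ)) := by
    intro hz
    exact hd0 l ((HomologySequence.exact₃ _ (hT l) (d l) (d l + 1)).isZero_of_both_zeros
      (hz.eq_of_src _ _) ((hk _ (by lia)).eq_of_tgt _ _))
  have hdl : d l = 0 := by
    rcases lt_trichotomy (d l) 0 with h | h | h
    · exact absurd (hGE' _ h) hnz
    · exact h
    · exact absurd (hLE' _ h) hnz
  have hXz : IsZero (X l.castSucc) := by
    apply isZero_of_homology
    intro j
    by_cases hj : d l ≤ j
    · exact hk j hj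
    · have hAz := (isGE_iff _ _).1 (hdGE l) (j - 1) (by lia)
      exact (HomologySequence.exact₁ _ (hT l) (j - 1) j).isZero_of_both_zeros
        (hAz.eq_of_src _ _) ((hGE' j (by lia)).eq_of_tgt _ _)
  have hiso : IsIso (g l) := (Triangle.isZero₁_iff_isIso₂ _ (hT l)).1 hXz
  have hphi : φ l = φ₀ := by
    have := hd l
    rw [hdl] at this
    simpa using this
  rw [← hphi]
  exact σ.P_iso _ _ _ (hAP l) ⟨(asIso (g l)).symm ≪≫ e'⟩

end Ring

end Stmt8Aux

/-- For any stability condition `σ` on `D^b(mod R)`, `R` an Artinian local commutative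
ring, having the Jordan–Hölder property, there is a phase `φ₀` such that every nonzero
finitely generated `R`-module, placed in degree `0`, lies in `P φ₀`; in particular
every nonzero finitely generated `R`-module is `σ`-semistable and all of them have the
same phase. -/
theorem stmt8 (R : Type u) [CommRing R] [IsArtinianRing R] [IsLocalRing R]
    [HasDerivedCategory.{w} (ModuleCat.{u} R)]
    (σ : StabilityConditionOn (DbCoh R)) (hJH : σ.HasJHProperty) :
    ∃ φ₀ : ℝ, ∀ M : ModuleCat.{u} R, Module.Finite R M → Nontrivial M →
      degZero R M ∈ σ.P φ₀ ∧ σ.IsSemistable φ₀ (degZero R M) := by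
  have hk : Module.Finite R (ModuleCat.of R R) := inferInstanceAs (Module.Finite R R)
  have hkn : Nontrivial (ModuleCat.of R R) := inferInstanceAs (Nontrivial R)
  have hex : ∃ (φ : ℝ) (E : DerivedCategory (ModuleCat.{u} R)), E ∈ σ.P φ ∧ ¬ IsZero E := by
    obtain ⟨n, X, f, φ, hX0, ⟨e⟩, hφ, hA⟩ :=
      σ.s4 _ (Stmt8Aux.degZero_mem _ hk) (Stmt8Aux.degZero_ne _ hkn)
    obtain _ | n := n
    · exact absurd (hX0.of_iso e.symm) (Stmt8Aux.degZero_ne _ hkn)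
    · obtain ⟨A, -, -, -, hA0, hAP⟩ := hA 0
      exact ⟨_, A, hAP, hA0⟩
  obtain ⟨φ, E, hE, hE0⟩ := hex
  obtain ⟨d, hdLE, hdGE, hd0⟩ := Stmt8Aux.exists_phase σ φ E hE hE0
  refine ⟨φ + d, fun M hM hMn => ?_⟩
  have hmem : degZero R M ∈ σ.P (φ + d) := by
    refine Stmt8Aux.main σ (φ + d) ?_ _ (Stmt8Aux.degZero_mem _ hM)
      (Stmt8Aux.degZero_ne _ hMn) inferInstance inferInstance
    intro ψ F hF hF0
    obtain ⟨c, hcLE, hcGE, hc0⟩ := Stmt8Aux.exists_phase σ ψ F hF hF0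
    exact ⟨c, hcLE, hcGE, hc0, le_antisymm
      (Stmt8Aux.phase_le σ ψ φ F E hF hE d c hcLE hdGE hc0 hd0)
      (Stmt8Aux.phase_le σ φ ψ E F hE hF c d hdLE hcGE hd0 hc0)⟩
  exact ⟨hmem, hmem, Stmt8Aux.degZero_ne _ hMn⟩
end

section
/- Let (R, 𝔪) be a commutative Artinian local ring with residue field k = R/𝔪. For any stability condition σ = (Z, P) on D^b(R) = D^b(mod R), every σ-stable object E of D^b(mod R) is isomorphic to k[n] for some integer n, where k is viewed as an object of D^b(mod R) concentrated in degree 0. -/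
open CategoryTheory Limits Pretriangulated DerivedCategory

universe w v u

section Aux

variable {C : Type*} [Category C] [Abelian C] [HasDerivedCategory.{w} C]

lemma aux_proj (X : DerivedCategory C) (b : ℤ) (hX : X.IsLE b) :
    ∃ (Y : C) (g : X ⟶ (singleFunctor C b).obj Y), IsIso ((homologyFunctor C b).map g) := by
  obtain ⟨U, V, hU, hV, f, g, h, hT⟩ := TStructure.t.exists_triangle X (b - 1) b (by lia)
  have hU' := (isLE_iff U (b - 1)).1 ⟨hU⟩
  have hV' := (isGE_iff V b).1 ⟨hV⟩
  have hX' := (isLE_iff X b).1 hX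
  have hVG : V.IsGE b := ⟨hV⟩
  have hVL : V.IsLE b := by
    rw [isLE_iff]
    intro i hi
    exact (HomologySequence.exact₃ _ hT i (i + 1) rfl).isZero_of_both_zeros
      ((hX' i hi).eq_of_src _ _) ((hU' (i + 1) (by lia)).eq_of_tgt _ _)
  have hm : Mono ((homologyFunctor C b).map g) :=
    (HomologySequence.mono_homologyMap_mor₂_iff _ hT b).2 ((hU' b (by lia)).eq_of_src _ _)
  have he : Epi ((homologyFunctor C b).map g) :=
    (HomologySequence.epi_homologyMap_mor₂_iff _ hT b (b + 1) rfl).2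
      ((hU' (b + 1) (by lia)).eq_of_tgt _ _)
  have hi : IsIso ((homologyFunctor C b).map g) := isIso_of_mono_of_epi _
  obtain ⟨Y, ⟨e⟩⟩ := exists_iso_singleFunctor_obj_of_isGE_of_isLE V b
  refine ⟨Y, g ≫ e.hom, ?_⟩
  rw [Functor.map_comp]
  infer_instance

lemma aux_incl (X : DerivedCategory C) (a : ℤ) (hX : X.IsGE a) :
    ∃ (Y : C) (f : (singleFunctor C a).obj Y ⟶ X), IsIso ((homologyFunctor C a).map f) := by
  obtain ⟨U, V, hU, hV, f, g, h, hT⟩ := TStructure.t.exists_triangle X a (a + 1) (by lia)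
  have hU' := (isLE_iff U a).1 ⟨hU⟩
  have hV' := (isGE_iff V (a + 1)).1 ⟨hV⟩
  have hX' := (isGE_iff X a).1 hX
  have hVL : U.IsLE a := ⟨hU⟩
  have hVG : U.IsGE a := by
    rw [isGE_iff]
    intro i hi
    exact (HomologySequence.exact₁ _ hT (i - 1) i (by lia)).isZero_of_both_zeros
      ((hV' (i - 1) (by lia)).eq_of_src _ _) ((hX' i (by lia)).eq_of_tgt _ _)
  have hm : Epi ((homologyFunctor C a).map f) :=
    (HomologySequence.epi_homologyMap_mor₁_iff _ hT a).2 ((hV' a (by lia)).eq_of_tgt _ _)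
  have he : Mono ((homologyFunctor C a).map f) :=
    (HomologySequence.mono_homologyMap_mor₁_iff _ hT (a - 1) a (by lia)).2
      ((hV' (a - 1) (by lia)).eq_of_src _ _)
  have hi : IsIso ((homologyFunctor C a).map f) := isIso_of_mono_of_epi _
  obtain ⟨Y, ⟨e⟩⟩ := exists_iso_singleFunctor_obj_of_isGE_of_isLE U a
  refine ⟨Y, e.inv ≫ f, ?_⟩
  rw [Functor.map_comp]
  infer_instance

lemma aux_nonzero (X Y : DerivedCategory C) (n : ℤ) (hX : X.IsLE n) (hY : Y.IsGE n)
    (α : (homologyFunctor C n).obj X ⟶ (homologyFunctor C n).obj Y) (hα : α ≠ 0) :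
    ∃ f : X ⟶ Y, f ≠ 0 := by
  obtain ⟨M, g, hg⟩ := aux_proj X n hX
  obtain ⟨N, f, hf⟩ := aux_incl Y n hY
  let e : ∀ M : C, (homologyFunctor C n).obj ((singleFunctor C n).obj M) ≅ M :=
    fun M => (singleFunctorCompHomologyFunctorIso C n).app M
  let β : M ⟶ N := (e M).inv ≫ inv ((homologyFunctor C n).map g) ≫ α ≫
    inv ((homologyFunctor C n).map f) ≫ (e N).hom
  refine ⟨g ≫ (singleFunctor C n).map β ≫ f, fun h => hα ?_⟩
  have h1 := congrArg (homologyFunctor C n).map h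
  rw [Functor.map_comp, Functor.map_comp, Functor.map_zero] at h1
  have h2 : (homologyFunctor C n).map ((singleFunctor C n).map β) = 0 := by
    rw [← cancel_epi ((homologyFunctor C n).map g), ← cancel_mono ((homologyFunctor C n).map f)]
    simpa using h1
  have h3 : (homologyFunctor C n).map ((singleFunctor C n).map β) ≫ (e N).hom = (e M).hom ≫ β :=
    (singleFunctorCompHomologyFunctorIso C n).hom.naturality β
  rw [h2, zero_comp] at h3
  have h4 : inv ((homologyFunctor C n).map g) ≫ α ≫
    inv ((homologyFunctor C n).map f) ≫ (e N).hom = 0 := by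
    simpa [β] using h3.symm
  rw [← cancel_epi (inv ((homologyFunctor C n).map g)),
    ← cancel_mono (inv ((homologyFunctor C n).map f) ≫ (e N).hom)]
  simpa using h4

lemma aux_homology_shift (X : DerivedCategory C) (a n b : ℤ) (h : n + b = a) :
    Nonempty ((homologyFunctor C b).obj (X⟦n⟧) ≅ (homologyFunctor C a).obj X) :=
  ⟨((homologyFunctor C 0).shiftIso n b a h).app X⟩

lemma aux_isZero (X : DerivedCategory C)
    (h : ∀ i, IsZero ((homologyFunctor C i).obj X)) : IsZero X := by
  have h1 : X.IsLE 0 := (isLE_iff X 0).2 fun i _ => h i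
  have h2 : X.IsGE 1 := (isGE_iff X 1).2 fun i _ => h i
  exact TStructure.t.isZero X 0 1 (by lia)

end Aux

section ModAux

variable {R : Type u} [CommRing R] [IsArtinianRing R] [IsLocalRing R]

lemma aux_surj (M : Type u) [AddCommGroup M] [Module R M] [Module.Finite R M] [Nontrivial M] :
    ∃ f : M →ₗ[R] (R ⧸ IsLocalRing.maximalIdeal R), Function.Surjective f := by
  obtain ⟨N, hN⟩ := IsCoatomic.exists_coatom (Submodule R M)
  have hs : IsSimpleModule R (M ⧸ N) := isSimpleModule_iff_isCoatom.2 hN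
  obtain ⟨I, hI, ⟨e⟩⟩ := isSimpleModule_iff_quot_maximal.mp hs
  obtain rfl := IsLocalRing.eq_maximalIdeal hI
  exact ⟨e.toLinearMap ∘ₗ N.mkQ, e.surjective.comp N.mkQ_surjective⟩

lemma aux_inj (M : Type u) [AddCommGroup M] [Module R M] [Module.Finite R M] [Nontrivial M] :
    ∃ f : (R ⧸ IsLocalRing.maximalIdeal R) →ₗ[R] M, Function.Injective f := by
  obtain ⟨N, hN⟩ := IsAtomic.exists_atom (Submodule R M)
  have hs : IsSimpleModule R N := isSimpleModule_iff_isAtom.2 hN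
  obtain ⟨I, hI, ⟨e⟩⟩ := isSimpleModule_iff_quot_maximal.mp hs
  obtain rfl := IsLocalRing.eq_maximalIdeal hI
  exact ⟨N.subtype ∘ₗ e.symm.toLinearMap, N.subtype_injective.comp e.symm.injective⟩

lemma aux_hom (M N : ModuleCat.{u} R) [Module.Finite R M] [Module.Finite R N]
    (hM : ¬ IsZero M) (hN : ¬ IsZero N) : ∃ α : M ⟶ N, α ≠ 0 := by
  have : Nontrivial M := by
    rw [← not_subsingleton_iff_nontrivial]
    exact fun h => hM (ModuleCat.isZero_of_subsingleton M)
  have : Nontrivial N := by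
    rw [← not_subsingleton_iff_nontrivial]
    exact fun h => hN (ModuleCat.isZero_of_subsingleton N)
  obtain ⟨f, hf⟩ := aux_surj (R := R) M
  obtain ⟨g, hg⟩ := aux_inj (R := R) N
  refine ⟨ModuleCat.ofHom (g ∘ₗ f), fun h => ?_⟩
  obtain ⟨m, hm⟩ := hf 1
  have h1 : g (f m) = 0 := by
    have := congrArg (fun t => ModuleCat.Hom.hom t m) h
    simpa using this
  rw [hm] at h1
  exact one_ne_zero (hg (h1.trans (map_zero g).symm))

end ModAux

section Main

variable {R : Type u} [CommRing R] [HasDerivedCategory.{w} (ModuleCat.{u} R)]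

lemma aux_least (E : DerivedCategory (ModuleCat.{u} R)) (hE : E ∈ DbCoh R) (h0 : ¬ IsZero E) :
    ∃ a : ℤ, E.IsGE a ∧ ¬ IsZero ((homologyFunctor (ModuleCat.{u} R) a).obj E) := by
  have hex : ∃ i, ¬ IsZero ((homologyFunctor (ModuleCat.{u} R) i).obj E) := by
    by_contra! h
    exact h0 (aux_isZero E h)
  obtain ⟨⟨a, b, hab⟩, -⟩ := hE
  obtain ⟨l, hl, hl'⟩ := Int.exists_least_of_bdd
    (P := fun i => ¬ IsZero ((homologyFunctor (ModuleCat.{u} R) i).obj E))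
    ⟨a, fun z hz => by by_contra! h; exact hz (hab z (Or.inl h))⟩ hex
  refine ⟨l, (isGE_iff _ _).2 fun i hi => ?_, hl⟩
  by_contra h
  exact absurd (hl' i h) (by lia)

lemma aux_greatest (E : DerivedCategory (ModuleCat.{u} R)) (hE : E ∈ DbCoh R) (h0 : ¬ IsZero E) :
    ∃ a : ℤ, E.IsLE a ∧ ¬ IsZero ((homologyFunctor (ModuleCat.{u} R) a).obj E) := by
  have hex : ∃ i, ¬ IsZero ((homologyFunctor (ModuleCat.{u} R) i).obj E) := by
    by_contra! h
    exact h0 (aux_isZero E h)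
  obtain ⟨⟨a, b, hab⟩, -⟩ := hE
  obtain ⟨l, hl, hl'⟩ := Int.exists_greatest_of_bdd
    (P := fun i => ¬ IsZero ((homologyFunctor (ModuleCat.{u} R) i).obj E))
    ⟨b, fun z hz => by by_contra! h; exact hz (hab z (Or.inr h))⟩ hex
  refine ⟨l, (isLE_iff _ _).2 fun i hi => ?_, hl⟩
  by_contra h
  exact absurd (hl' i h) (by lia)

lemma aux_P_shift (σ : StabilityConditionOn (DbCoh R)) (n : ℤ) :
    ∀ (φ : ℝ) (X : DerivedCategory (ModuleCat.{u} R)), X ∈ σ.P φ → X⟦n⟧ ∈ σ.P (φ + n) := by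
  induction n using Int.induction_on with
  | zero =>
    intro φ X hX
    have := σ.P_iso φ X (X⟦(0 : ℤ)⟧) hX ⟨((shiftFunctorZero _ ℤ).app X).symm⟩
    simpa using this
  | succ i ih =>
    intro φ X hX
    have h := (σ.s3 (φ + (i : ℤ)) (X⟦((i : ℤ) + 1 : ℤ)⟧)).2
      ⟨_, ih φ X hX, ⟨(shiftFunctorAdd' _ (i : ℤ) 1 _ rfl).app X⟩⟩
    convert h using 2
    push_cast; ring
  | pred i ih =>
    intro φ X hX
    have h := ih φ X hX
    have e : φ + ((-(i : ℤ) : ℤ) : ℝ) = (φ + ((-(i : ℤ) - 1 : ℤ) : ℝ)) + 1 := by push_cast; ring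
    rw [e, σ.s3] at h
    obtain ⟨Y, hY, ⟨f⟩⟩ := h
    refine σ.P_iso _ Y _ hY ⟨?_⟩
    exact (shiftFunctorCompIsoId _ (1 : ℤ) (-1) (by lia)).symm.app Y ≪≫
      (shiftFunctor _ (-1 : ℤ)).mapIso f.symm ≪≫
      (shiftFunctorAdd' _ (-(i : ℤ)) (-1) (-(i : ℤ) - 1) (by lia)).symm.app X

lemma aux_compare [IsArtinianRing R] [IsLocalRing R] (σ : StabilityConditionOn (DbCoh R))
    (φ ψ : ℝ) (X Y : DerivedCategory (ModuleCat.{u} R)) (hX : X ∈ σ.P φ) (hY : Y ∈ σ.P ψ)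
    (a b : ℤ) (hXb : X.IsLE b) (hXb' : ¬ IsZero ((homologyFunctor (ModuleCat.{u} R) b).obj X))
    (hYa : Y.IsGE a) (hYa' : ¬ IsZero ((homologyFunctor (ModuleCat.{u} R) a).obj Y)) :
    φ + b ≤ ψ + a := by
  by_contra! hlt
  have h1 := aux_P_shift σ (a - b) ψ Y hY
  have h2 : (Y⟦a - b⟧).IsGE b := TStructure.t.isGE_shift Y a (a - b) b (by lia)
  obtain ⟨e⟩ := aux_homology_shift Y a (a - b) b (by lia)
  have := (σ.P_le _ hX).2 b
  have := (σ.P_le _ hY).2 a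
  obtain ⟨α, hα⟩ := aux_hom _ _ hXb' hYa'
  obtain ⟨f, hf⟩ := aux_nonzero X (Y⟦a - b⟧) b hXb h2 (α ≫ e.inv) (by
    intro h
    apply hα
    rw [← cancel_mono e.inv, h, zero_comp])
  exact hf (σ.s2 φ _ (by push_cast; linarith) X hX _ h1 f)

lemma aux_single [IsArtinianRing R] [IsLocalRing R] (σ : StabilityConditionOn (DbCoh R))
    (φ : ℝ) (X : DerivedCategory (ModuleCat.{u} R)) (hX : X ∈ σ.P φ) (h0 : ¬ IsZero X) :
    ∃ b : ℤ, X.IsLE b ∧ X.IsGE b ∧ ¬ IsZero ((homologyFunctor (ModuleCat.{u} R) b).obj X) := by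
  obtain ⟨a, ha, ha'⟩ := aux_least X (σ.P_le _ hX) h0
  obtain ⟨b, hb, hb'⟩ := aux_greatest X (σ.P_le _ hX) h0
  have h := aux_compare σ φ φ X X hX hX a b hb hb' ha ha'
  have h' : b ≤ a := by exact_mod_cast (add_le_add_iff_left φ).1 h
  exact ⟨b, hb, TStructure.t.isGE_of_ge X b a h', hb'⟩

lemma aux_HN [IsArtinianRing R] [IsLocalRing R] (σ : StabilityConditionOn (DbCoh R))
    (φ : ℝ) (E : DerivedCategory (ModuleCat.{u} R)) (hE : E ∈ σ.P φ) (b : ℤ)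
    (hEL : E.IsLE b) (hEG : E.IsGE b)
    (hE0 : ¬ IsZero ((homologyFunctor (ModuleCat.{u} R) b).obj E))
    (Y : DerivedCategory (ModuleCat.{u} R)) (hY : Y ∈ DbCoh R) (hYL : Y.IsLE b) (hYG : Y.IsGE b) :
    Y ∈ σ.P φ := by
  by_cases hY0 : IsZero Y
  · exact σ.P_zero φ Y hY0
  obtain ⟨n, X, f, ψ, hX0, ⟨e⟩, hψ, H⟩ := σ.s4 Y hY hY0
  choose A g h hT hA0 hAP using H
  choose c hcL hcG hc0 using fun i => aux_single σ (ψ i) (A i) (hAP i) (hA0 i)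
  have hc : ∀ i, ψ i + c i = φ + b := fun i => le_antisymm
    (aux_compare σ _ _ _ _ (hAP i) hE b (c i) (hcL i) (hc0 i) hEG hE0)
    (aux_compare σ _ _ _ _ hE (hAP i) (c i) b hEL hE0 (hcG i) (hc0 i))
  have hmono : ∀ i j, i < j → c i < c j := by
    intro i j hij
    have h1 := hψ hij
    have h2 := hc i
    have h3 := hc j
    have : (c i : ℝ) < c j := by linarith
    exact_mod_cast this
  have hA : ∀ i d, d ≠ c i → IsZero ((homologyFunctor (ModuleCat.{u} R) d).obj (A i)) := by
    intro i d hd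
    rcases lt_or_gt_of_ne hd with h | h
    · exact (isGE_iff _ _).1 (hcG i) d h
    · exact (isLE_iff _ _).1 (hcL i) d h
  have hQ : ∀ k : Fin (n + 1), ∀ d : ℤ, (∀ i : Fin n, i.castSucc < k → c i < d) →
      IsZero ((homologyFunctor (ModuleCat.{u} R) d).obj (X k)) := by
    intro k
    induction k using Fin.induction with
    | zero => exact fun d _ => Functor.map_isZero _ hX0
    | succ k ih =>
      intro d hd
      have z1 := ih d fun i hi => hd i (hi.trans (Fin.castSucc_lt_succ))
      have z2 := hA k d (hd k (Fin.castSucc_lt_succ)).ne'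
      exact (HomologySequence.exact₂ _ (hT k) d).isZero_of_both_zeros
        (z1.eq_of_src _ _) (z2.eq_of_tgt _ _)
  have hR : ∀ k : Fin (n + 1), ∀ i : Fin n, i.castSucc < k →
      ¬ IsZero ((homologyFunctor (ModuleCat.{u} R) (c i)).obj (X k)) := by
    intro k
    induction k using Fin.induction with
    | zero => exact fun i hi => absurd hi (Fin.not_lt_zero _)
    | succ k ih =>
      intro i hi hz
      rcases (Fin.castSucc_lt_succ_iff.1 hi).lt_or_eq with hlt | rfl
      · refine ih i (Fin.castSucc_lt_castSucc_iff.2 hlt) ?_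
        have hm : Mono ((homologyFunctor (ModuleCat.{u} R) (c i)).map (f k)) :=
          (HomologySequence.mono_homologyMap_mor₁_iff _ (hT k) (c i - 1) (c i) (by lia)).2
            ((hA k _ (by have := hmono i k hlt; lia)).eq_of_src _ _)
        exact IsZero.of_mono ((homologyFunctor (ModuleCat.{u} R) (c i)).map (f k)) hz
      · refine hc0 i ?_
        have hz' := hQ i.castSucc (c i + 1) fun j hj => by
          have := hmono j i (Fin.castSucc_lt_castSucc_iff.1 hj); lia
        have hm : Epi ((homologyFunctor (ModuleCat.{u} R) (c i)).map (g i)) :=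
          (HomologySequence.epi_homologyMap_mor₂_iff _ (hT i) (c i) (c i + 1) rfl).2
            (hz'.eq_of_tgt _ _)
        exact IsZero.of_epi ((homologyFunctor (ModuleCat.{u} R) (c i)).map (g i)) hz
  have hcb : ∀ i, c i = b := by
    intro i
    by_contra hne
    refine hR (Fin.last n) i (Fin.castSucc_lt_last i) ?_
    refine IsZero.of_iso ?_ ((homologyFunctor (ModuleCat.{u} R) (c i)).mapIso e)
    rcases lt_or_gt_of_ne hne with h | h
    · exact (isGE_iff _ _).1 hYG _ h
    · exact (isLE_iff _ _).1 hYL _ h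
  match n, X, f, ψ, hX0, e, hψ, A, g, h, hT, hA0, hAP, c, hc, hmono, hcb with
  | 0, X, f, ψ, hX0, e, hψ, A, g, h, hT, hA0, hAP, c, hc, hmono, hcb =>
    exact absurd (hX0.of_iso e.symm) hY0
  | 1, X, f, ψ, hX0, e, hψ, A, g, h, hT, hA0, hAP, c, hc, hmono, hcb =>
    have hi : IsIso (g 0) := (Triangle.isZero₁_iff_isIso₂ _ (hT 0)).1 hX0
    have hp : ψ 0 = φ := by
      have h1 := hc 0
      rw [hcb 0] at h1
      linarith
    rw [← hp]
    exact σ.P_iso _ _ _ (hAP 0) ⟨(asIso (g 0)).symm ≪≫ e⟩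
  | n + 2, X, f, ψ, hX0, e, hψ, A, g, h, hT, hA0, hAP, c, hc, hmono, hcb =>
    have h1 := hmono 0 1 (by simp)
    rw [hcb, hcb] at h1
    exact absurd h1 (lt_irrefl _)

end Main

/-- For any stability condition `σ` on `D^b(mod R)`, `R` an Artinian local commutative
ring, every `σ`-stable object is isomorphic to a shift `k[n]` of the residue field
`k = R/𝔪` placed in degree `0`. -/
theorem stmt9 (R : Type u) [CommRing R] [IsArtinianRing R] [IsLocalRing R]
    [HasDerivedCategory.{w} (ModuleCat.{u} R)]
    (σ : StabilityConditionOn (DbCoh R))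
    (E : DerivedCategory (ModuleCat.{u} R)) (φ : ℝ) (hE : σ.IsStable φ E) :
    ∃ n : ℤ, Nonempty
      (E ≅ (degZero R (ModuleCat.of R (R ⧸ IsLocalRing.maximalIdeal R)))⟦n⟧) := by
  obtain ⟨⟨hEP, hE0⟩, hst⟩ := hE
  obtain ⟨b, hL, hG, hb0⟩ := aux_single σ φ E hEP hE0
  have hfin := (σ.P_le _ hEP).2
  have := hfin b
  set k := ModuleCat.of R (R ⧸ IsLocalRing.maximalIdeal R) with hk
  have hL' := (isLE_iff _ _).1 hL
  have hG' := (isGE_iff _ _).1 hG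
  let S := (singleFunctor (ModuleCat.{u} R) b).obj k
  have hSL' := (isLE_iff S b).1 inferInstance
  have hSG' := (isGE_iff S b).1 inferInstance
  let eS : (homologyFunctor (ModuleCat.{u} R) b).obj S ≅ k :=
    (singleFunctorCompHomologyFunctorIso (ModuleCat.{u} R) b).app k
  have hkne : ¬ IsZero k := by
    intro h
    have := ModuleCat.subsingleton_of_isZero h
    exact not_subsingleton (R ⧸ IsLocalRing.maximalIdeal R) this
  have hS0 : ¬ IsZero S := fun h =>
    hkne (IsZero.of_iso (Functor.map_isZero (homologyFunctor (ModuleCat.{u} R) b) h) eS.symm)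
  have hScoh : S ∈ DbCoh R := by
    refine ⟨⟨b, b, fun i hi => hi.elim (hSG' i) (hSL' i)⟩, fun i => ?_⟩
    by_cases hi : i = b
    · subst hi
      have : Module.Finite R k := inferInstanceAs (Module.Finite R (R ⧸ IsLocalRing.maximalIdeal R))
      exact Module.Finite.equiv eS.symm.toLinearEquiv
    · have hz : IsZero ((homologyFunctor (ModuleCat.{u} R) i).obj S) := by
        rcases lt_or_gt_of_ne hi with h | h
        · exact hSG' i h
        · exact hSL' i h
      have := ModuleCat.subsingleton_of_isZero hz
      infer_instance
  -- a map `E ⟶ S` which is surjective on `H^b`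
  obtain ⟨g, hg⟩ : ∃ g : E ⟶ S, Epi ((homologyFunctor (ModuleCat.{u} R) b).map g) := by
    obtain ⟨M, p, hp⟩ := aux_proj E b hL
    let eM : (homologyFunctor (ModuleCat.{u} R) b).obj
        ((singleFunctor (ModuleCat.{u} R) b).obj M) ≅ M :=
      (singleFunctorCompHomologyFunctorIso (ModuleCat.{u} R) b).app M
    let e' := asIso ((homologyFunctor (ModuleCat.{u} R) b).map p) ≪≫ eM
    have : Module.Finite R M := Module.Finite.equiv e'.toLinearEquiv
    have : Nontrivial M := by
      rw [← not_subsingleton_iff_nontrivial]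
      exact fun h => hb0 ((ModuleCat.isZero_of_subsingleton M).of_iso e')
    obtain ⟨q, hq⟩ := aux_surj (R := R) M
    let q' : M ⟶ k := ModuleCat.ofHom q
    have hq' : Epi q' := (ModuleCat.epi_iff_surjective _).2 hq
    refine ⟨p ≫ (singleFunctor (ModuleCat.{u} R) b).map q', ?_⟩
    have h3 : (homologyFunctor _ b).map ((singleFunctor _ b).map q') = eM.hom ≫ q' ≫ eS.inv := by
      have : (homologyFunctor _ b).map ((singleFunctor _ b).map q') ≫ eS.hom = eM.hom ≫ q' :=
        (singleFunctorCompHomologyFunctorIso (ModuleCat.{u} R) b).hom.naturality q'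
      rw [← Category.assoc, ← this, Category.assoc, Iso.hom_inv_id, Category.comp_id]
    rw [Functor.map_comp, h3]
    infer_instance
  obtain ⟨K, f, h, hT⟩ := distinguished_cocone_triangle₁ g
  have hKL : K.IsLE b := by
    rw [isLE_iff]
    intro i hi
    refine (HomologySequence.exact₁ _ hT (i - 1) i (by lia)).isZero_of_both_zeros ?_
      ((hL' i hi).eq_of_tgt _ _)
    refine (HomologySequence.epi_homologyMap_mor₂_iff _ hT (i - 1) i (by lia)).1 ?_
    rcases (show b ≤ i - 1 by lia).eq_or_lt with hbi | hbi
    · subst hbi; exact hg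
    · exact ⟨fun _ _ _ => (hSL' _ hbi).eq_of_src _ _⟩
  have hKG : K.IsGE b := by
    rw [isGE_iff]
    intro i hi
    exact (HomologySequence.exact₁ _ hT (i - 1) i (by lia)).isZero_of_both_zeros
      ((hSG' (i - 1) (by lia)).eq_of_src _ _) ((hG' i hi).eq_of_tgt _ _)
  have hKm : Mono ((homologyFunctor (ModuleCat.{u} R) b).map f) :=
    (HomologySequence.mono_homologyMap_mor₁_iff _ hT (b - 1) b (by lia)).2
      ((hSG' (b - 1) (by lia)).eq_of_src _ _)
  have hKcoh : K ∈ DbCoh R := by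
    have hKL' := (isLE_iff K b).1 hKL
    have hKG' := (isGE_iff K b).1 hKG
    refine ⟨⟨b, b, fun i hi => hi.elim (hKG' i) (hKL' i)⟩, fun i => ?_⟩
    by_cases hi : i = b
    · subst hi
      exact Module.Finite.of_injective _ ((ModuleCat.mono_iff_injective _).1 hKm)
    · have hz : IsZero ((homologyFunctor (ModuleCat.{u} R) i).obj K) := by
        rcases lt_or_gt_of_ne hi with h | h
        · exact hKG' i h
        · exact hKL' i h
      have := ModuleCat.subsingleton_of_isZero hz
      infer_instance
  have hKP := aux_HN σ φ E hEP b hL hG hb0 K hKcoh hKL hKG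
  have hSP := aux_HN σ φ E hEP b hL hG hb0 S hScoh inferInstance inferInstance
  rcases hst K S f g h hT hKP hSP with hz | hz
  · have hi : IsIso g := (Triangle.isZero₁_iff_isIso₂ _ hT).1 hz
    refine ⟨-b, ⟨asIso g ≪≫ ?_⟩⟩
    exact (((singleFunctors (ModuleCat.{u} R)).shiftIso (-b) b 0 (by lia)).app k).symm
  · exact absurd hz hS0
end
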